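/- Let A be a real m×n matrix. Then exactly one of the following two conditions holds: (1) there exists a nonzero row vector x ∈ ℝ^m with x ≥ 0 componentwise and xA ≤ 0 componentwise; (2) there exists a column vector y ∈ ℤⁿ all of whose entries are strictly positive integers such that every entry of Ay is strictly positive. -/

import Mathlib

/-!
For a real matrix `B`, the vectors `z ᵥ* B` with `z` in the standard simplex form a compact convex
set. Either it contains `0`, or a linear functional `v ↦ y ⬝ᵥ v` is positive on it, which says that
all entries of `B *ᵥ y` are positive (Gordan). The solutions `y` of the latter system form an open
cone, and a nonempty open cone contains an integer vector: for `y` in the cone, `⌊t • y⌋ / t` tends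
to `y`, so `⌊t • y⌋` lies in the cone for large `t`. The theorem is this
alternative for the matrix obtained by stacking `A` on top of the identity, whose extra rows both
encode `0 < y` and provide the slack variables that turn `x ᵥ* A ≤ 0` into an equation.
-/

open Filter Matrix Topology

theorem tendsto_intFloor_mul_div_atTop {R : Type*} [TopologicalSpace R] [Field R] [LinearOrder R]
    [IsStrictOrderedRing R] [OrderTopology R] [FloorRing R] (a : R) :
    Tendsto (fun t : R ↦ (⌊a * t⌋ : R) / t) atTop (𝓝 a) := by
  have lower_limit : Tendsto (fun t : R ↦ a - t⁻¹) atTop (𝓝 a) := by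
    simpa using tendsto_const_nhds (x := a).sub (tendsto_inv_atTop_zero (𝕜 := R))
  refine tendsto_of_tendsto_of_tendsto_of_le_of_le' lower_limit tendsto_const_nhds ?_ ?_ <;>
    filter_upwards [eventually_gt_atTop 0] with t ht
  · rw [le_div_iff₀ ht, sub_mul, inv_mul_cancel₀ ht.ne']
    exact (Int.sub_one_lt_floor _).le
  · exact (div_le_iff₀ ht).2 (Int.floor_le _)

theorem exists_intCast_mem_of_isOpen_of_smul_mem {R ι : Type*} [TopologicalSpace R] [Field R]
    [LinearOrder R] [IsStrictOrderedRing R] [OrderTopology R] [FloorRing R] {s : Set (ι → R)}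
    (hs : IsOpen s) (hne : s.Nonempty) (hsmul : ∀ t : R, 0 < t → ∀ v ∈ s, t • v ∈ s) :
    ∃ y : ι → ℤ, (fun j ↦ (y j : R)) ∈ s := by
  obtain ⟨v, hv⟩ := hne
  have approx : Tendsto (fun (t : R) j ↦ (⌊v j * t⌋ : R) / t) atTop (𝓝 v) :=
    tendsto_pi_nhds.2 fun j ↦ tendsto_intFloor_mul_div_atTop (v j)
  obtain ⟨t, hts, ht⟩ :=
    ((approx.eventually_mem (hs.mem_nhds hv)).and (eventually_gt_atTop 0)).exists
  refine ⟨fun j ↦ ⌊v j * t⌋, ?_⟩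
  convert hsmul t ht _ hts using 1
  ext j
  exact (mul_div_cancel₀ _ ht.ne').symm

theorem dotProduct_pos_of_pos_of_forall_pos {R m : Type*} [Fintype m] [Semiring R] [PartialOrder R]
    [IsStrictOrderedRing R] {z w : m → R} (hz : 0 < z) (hw : ∀ i, 0 < w i) : 0 < z ⬝ᵥ w := by
  obtain ⟨hz_nonneg, i, hi⟩ := Pi.lt_def.1 hz
  exact Finset.sum_pos' (fun k _ ↦ mul_nonneg (hz_nonneg k) (hw k).le)
    ⟨i, Finset.mem_univ i, mul_pos hi (hw i)⟩

theorem exists_intCast_mulVec_pos {R m n : Type*} [TopologicalSpace R] [Field R] [LinearOrder R]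
    [IsStrictOrderedRing R] [OrderTopology R] [FloorRing R] [Finite m] [Fintype n]
    {B : Matrix m n R} (hB : ∃ y : n → R, ∀ i, 0 < (B *ᵥ y) i) :
    ∃ y : n → ℤ, ∀ i, 0 < (B *ᵥ fun j ↦ (y j : R)) i := by
  refine exists_intCast_mem_of_isOpen_of_smul_mem (s := {y | ∀ i, 0 < (B *ᵥ y) i}) ?_ hB ?_
  · simp only [Set.ofPred_forall]
    exact isOpen_iInter_of_finite fun i ↦ isOpen_lt (by fun_prop) (by fun_prop)
  · intro t ht y hy i
    rw [mulVec_smul]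
    exact mul_pos ht (hy i)

theorem exists_vecMul_fromRows_one_eq_zero_iff {R m n : Type*} [Fintype m] [Fintype n]
    [DecidableEq n] [Ring R] [PartialOrder R] [IsOrderedAddMonoid R] {A : Matrix m n R} :
    (∃ z, 0 < z ∧ z ᵥ* fromRows A (1 : Matrix n n R) = 0) ↔
      ∃ x, x ≠ 0 ∧ 0 ≤ x ∧ x ᵥ* A ≤ 0 := by
  constructor
  · rintro ⟨z, hz, hzA⟩
    obtain ⟨x, w, rfl⟩ : ∃ x w, z = Sum.elim x w := ⟨_, _, (Sum.elim_comp_inl_inr z).symm⟩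
    obtain ⟨hx, hw⟩ : 0 ≤ x ∧ 0 ≤ w := Sum.const_le_elim_iff.1 hz.le
    rw [sumElim_vecMul_fromRows, vecMul_one] at hzA
    have hx_ne : x ≠ 0 := by
      rintro rfl
      rw [zero_vecMul, zero_add] at hzA
      simp [hzA] at hz
    refine ⟨x, hx_ne, hx, ?_⟩
    rw [eq_neg_of_add_eq_zero_left hzA]
    exact neg_nonpos.2 hw
  · rintro ⟨x, hx_ne, hx, hxA⟩
    refine ⟨Sum.elim x (-(x ᵥ* A)), ?_, ?_⟩
    · obtain ⟨_, i, hi⟩ := Pi.lt_def.1 (lt_of_le_of_ne hx hx_ne.symm)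
      exact Pi.lt_def.2 ⟨Sum.const_le_elim_iff.2 ⟨hx, neg_nonneg.2 hxA⟩, Sum.inl i, hi⟩
    · rw [sumElim_vecMul_fromRows, vecMul_one, add_neg_cancel]

theorem forall_fromRows_one_mulVec_pos_iff {R m n : Type*} [Fintype n] [DecidableEq n]
    [Semiring R] [Preorder R] {A : Matrix m n R} {y : n → R} :
    (∀ i, 0 < (fromRows A (1 : Matrix n n R) *ᵥ y) i) ↔ (∀ j, 0 < y j) ∧ ∀ i, 0 < (A *ᵥ y) i := by
  rw [fromRows_mulVec, one_mulVec, Sum.forall, and_comm]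
  simp only [Sum.elim_inl, Sum.elim_inr]

section Real

variable {m n : Type*} [Fintype m] [Fintype n]

theorem exists_mulVec_pos_of_forall_vecMul_ne_zero {B : Matrix m n ℝ}
    (hB : ∀ z, 0 < z → z ᵥ* B ≠ 0) : ∃ y : n → ℝ, ∀ i, 0 < (B *ᵥ y) i := by
  classical
  let K : Set (n → ℝ) := B.vecMulLinear '' stdSimplex ℝ m
  have K_convex : Convex ℝ K := (convex_stdSimplex ℝ m).linear_image _
  have K_compact : IsCompact K :=
    (isCompact_stdSimplex ℝ m).image (LinearMap.continuous_of_finiteDimensional _)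
  have zero_notMem : (0 : n → ℝ) ∉ K := by
    rintro ⟨z, ⟨hz_nonneg, hz_sum⟩, hzB⟩
    have hz_ne : z ≠ 0 := by
      rintro rfl
      simp at hz_sum
    exact hB z (lt_of_le_of_ne hz_nonneg hz_ne.symm) hzB
  obtain ⟨f, u, hu, hf⟩ :=
    geometric_hahn_banach_point_closed K_convex K_compact.isClosed zero_notMem
  obtain ⟨y, hy⟩ := (dotProductEquiv ℝ n).surjective f.toLinearMap
  have f_apply (v : n → ℝ) : f v = v ⬝ᵥ y :=
    (LinearMap.congr_fun hy v).symm.trans (dotProduct_comm y v)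
  refine ⟨y, fun i ↦ ?_⟩
  calc 0 < f (Pi.single i 1 ᵥ* B) :=
        (map_zero f ▸ hu).trans (hf _ ⟨_, single_mem_stdSimplex ℝ i, rfl⟩)
    _ = (B *ᵥ y) i := by rw [f_apply, ← dotProduct_mulVec, single_one_dotProduct]

theorem xor_exists_vecMul_eq_zero_exists_intCast_mulVec_pos (B : Matrix m n ℝ) :
    Xor (∃ z, 0 < z ∧ z ᵥ* B = 0) (∃ y : n → ℤ, ∀ i, 0 < (B *ᵥ fun j ↦ (y j : ℝ)) i) := by
  refine (xor_iff_or_and_not_and _ _).2 ⟨?_, ?_⟩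
  · refine or_iff_not_imp_left.2 fun hB ↦ exists_intCast_mulVec_pos ?_
    exact exists_mulVec_pos_of_forall_vecMul_ne_zero fun z hz hzB ↦ hB ⟨z, hz, hzB⟩
  · rintro ⟨⟨z, hz, hzB⟩, y, hy⟩
    have pairing_pos := dotProduct_pos_of_pos_of_forall_pos hz hy
    rw [dotProduct_mulVec, hzB, zero_dotProduct] at pairing_pos
    exact pairing_pos.false

theorem farkas_minkowski_integer_general (A : Matrix m n ℝ) :
    Xor (∃ x : m → ℝ, x ≠ 0 ∧ 0 ≤ x ∧ x ᵥ* A ≤ 0)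
      (∃ y : n → ℤ, (∀ j, 0 < y j) ∧ ∀ i, 0 < (A *ᵥ fun j ↦ (y j : ℝ)) i) := by
  classical
  have gordan := xor_exists_vecMul_eq_zero_exists_intCast_mulVec_pos
    (fromRows A (1 : Matrix n n ℝ))
  simpa only [exists_vecMul_fromRows_one_eq_zero_iff, forall_fromRows_one_mulVec_pos_iff,
    Int.cast_pos] using gordan

end Real

theorem farkas_minkowski_integer (m n : ℕ) (A : Matrix (Fin m) (Fin n) ℝ) :
    Xor'
      (∃ x : Fin m → ℝ, x ≠ 0 ∧ (∀ i, 0 ≤ x i) ∧ ∀ j, Matrix.vecMul x A j ≤ 0)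
      (∃ y : Fin n → ℤ, (∀ j, 0 < y j) ∧
        ∀ i, 0 < Matrix.mulVec A (fun j => (y j : ℝ)) i) :=
  farkas_minkowski_integer_general A
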